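/- (First half of the proof of Theorem 1.) Let k ≥ 1 satisfy c − 3R·r_max^k − 2R·r_max^{k+1} > 0, let q_k ≥ 1 be the integer with R·r_max^{q_k} ≤ c − 2R·r_max^{k+1} − 2R·r_max^k < R·r_max^{q_k−1}, and set ε_k := s·2^{s+1}·R·Q·r_max^k / r_min^{s·q_k}, where Q := (c/r_min)^{s−1} if s ≥ 1 and Q := (c − 2R·r_max^k − 2R·r_max^{k+1})^{s−1} if s < 1. Let x̃ ∈ E and d̃ ∈ [c − 2R·r_max^{k+1}, (c − 2R·r_max^{k+1})/r_min] be such that the sphere ∂B(x̃,d̃) meets E. Then there exist x', y ∈ A_k with d' := dist(x',y) ∈ [c − 2R·r_max^k − 2R·r_max^{k+1}, c/r_min] such that (2d̃)^s/μ(B(x̃,d̃)) − (2d')^s/μ_k(B(x',d')) ≤ ε_k. -/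

import Mathlib

/-!
Write `ρ = R * rmax ^ (k + 1)`, a bound for the diameter of every cylinder `f_w(E)` with `w` of
length `k + 1`, and call `f_w(p_last)` the marked point of that cylinder.

Let `x'` be the marked point of a cylinder containing `xt`, and let `y` be a marked point whose
distance `d'` to `x'` is least among the distances that are at least `dt - 2ρ`.  The marked point of
a cylinder through a point of the sphere lies within `dt + 2ρ` of `x'`, so `y` exists and
`|d' - dt| ≤ 2ρ`.  By minimality, a marked point in `B(x', d')` is at distance less than `dt - 2ρ`
from `x'`, hence its whole cylinder lies in `B(xt, dt)`.  Iterating the self-similarity of `μ`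
(`measure_eq_sum_words`) turns this into `μ_{k+1}(B(x', d')) ≤ μ(B(xt, dt))` (`muk_le_measure`), and
the difference of the two densities is at most `2 ^ s * (dt ^ s - d' ^ s) / μ(B(xt, dt))`.

The numerator is bounded by the mean value theorem (`rpow_sub_rpow_le`).  For the denominator, the
cylinder of length `qk` through `xt` has diameter less than `dt` and mass at least
`rmin ^ (s * qk)` (`le_measure_of_word`).
-/

open MeasureTheory Metric Set

noncomputable section

/-- Composition of the maps of the IFS along a word (list of letters). -/
def fword {m : ℕ} {X : Type*} (f : Fin m → X → X) : List (Fin m) → X → X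
  | [] => id
  | i :: w => f i ∘ fword f w

/-- Product of the contraction ratios along a word. -/
def rword {m : ℕ} (r : Fin m → ℝ) (w : List (Fin m)) : ℝ := (w.map r).prod

/-- The point clouds: `cloud f p k` is the set `A_{k+1}` of the paper
(`cloud f p 0 = A₁` is the set of fixed points). -/
def cloud {m : ℕ} {X : Type*} (f : Fin m → X → X) (p : Fin m → X) : ℕ → Set X
  | 0 => Set.range p
  | k + 1 => ⋃ i, f i '' cloud f p k

/-- The discrete measure: `muk f p r s k` is the measure `μ_{k+1}` of the paper,
supported on `cloud f p k = A_{k+1}`. -/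
def muk {m : ℕ} {X : Type*} [MeasurableSpace X] (f : Fin m → X → X) (p : Fin m → X)
    (r : Fin m → ℝ) (s : ℝ) (k : ℕ) : Measure X :=
  ∑ w : Fin (k + 1) → Fin m,
    ENNReal.ofReal ((∏ j, r (w j)) ^ s) •
      Measure.dirac (fword f (List.ofFn w) (p (w (Fin.last k))))

section Words

variable {m : ℕ}

lemma fword_ofFn_succ {X : Type*} (f : Fin m → X → X) {k : ℕ} (w : Fin (k + 1) → Fin m) (x : X) :
    fword f (List.ofFn w) x = f (w 0) (fword f (List.ofFn fun j : Fin k => w j.succ) x) := by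
  rw [List.ofFn_succ]; rfl

/-- The marked point of a cylinder belongs to the point cloud; the innermost map of the word acts
trivially because it fixes the base point. -/
lemma fword_mem_cloud {X : Type*} {f : Fin m → X → X} {p : Fin m → X}
    (hp : ∀ i, f i (p i) = p i) (k : ℕ) (w : Fin (k + 1) → Fin m) :
    fword f (List.ofFn w) (p (w (Fin.last k))) ∈ cloud f p k := by
  induction k with
  | zero =>
    rw [fword_ofFn_succ]
    simp only [List.ofFn_zero, fword, id]
    have : Fin.last 0 = 0 := rfl
    rw [this, hp]
    exact ⟨_, rfl⟩
  | succ k ih =>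
    rw [fword_ofFn_succ]
    exact mem_iUnion.2 ⟨w 0, _, ih fun j => w j.succ, rfl⟩

lemma dist_fword {X : Type*} [PseudoMetricSpace X] {f : Fin m → X → X} {r : Fin m → ℝ}
    (hsim : ∀ i x y, dist (f i x) (f i y) = r i * dist x y) {k : ℕ} (w : Fin k → Fin m) (x y : X) :
    dist (fword f (List.ofFn w) x) (fword f (List.ofFn w) y) = (∏ j, r (w j)) * dist x y := by
  induction k with
  | zero => simp [fword]
  | succ k ih =>
    rw [fword_ofFn_succ, fword_ofFn_succ, hsim, ih, Fin.prod_univ_succ, mul_assoc]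

lemma exists_word_of_mem {X : Type*} {f : Fin m → X → X} {E : Set X} (hE : E = ⋃ i, f i '' E)
    (k : ℕ) {x : X} (hx : x ∈ E) :
    ∃ w : Fin k → Fin m, ∃ e ∈ E, fword f (List.ofFn w) e = x := by
  induction k generalizing x with
  | zero => exact ⟨Fin.elim0, x, hx, by simp [fword]⟩
  | succ k ih =>
    rw [hE] at hx
    obtain ⟨i, y, hy, rfl⟩ := mem_iUnion.1 hx
    obtain ⟨w, e, he, rfl⟩ := ih hy
    exact ⟨Fin.cons i w, e, he, by rw [fword_ofFn_succ]; simp⟩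

lemma fixedPoint_mem {X : Type*} [PseudoMetricSpace X] {f : X → X} {a : ℝ} (ha : a ∈ Ioo (0 : ℝ) 1)
    (hsim : ∀ x y, dist (f x) (f y) = a * dist x y) {E : Set X} (hne : E.Nonempty)
    (hcl : IsClosed E) (hmaps : ∀ x ∈ E, f x ∈ E) {p : X} (hp : f p = p) : p ∈ E := by
  obtain ⟨e, he⟩ := hne
  have hmem : ∀ N : ℕ, f^[N] e ∈ E := by
    intro N
    induction N with
    | zero => exact he
    | succ N ih => rw [Function.iterate_succ_apply']; exact hmaps _ ih
  have hdist : ∀ N : ℕ, dist (f^[N] e) p = a ^ N * dist e p := by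
    intro N
    induction N with
    | zero => simp
    | succ N ih =>
      rw [Function.iterate_succ_apply', ← congrArg (dist (f (f^[N] e))) hp, hsim, ih]; ring
  have hlim : Filter.Tendsto (fun N : ℕ => f^[N] e) Filter.atTop (nhds p) := by
    rw [tendsto_iff_dist_tendsto_zero]
    simp only [hdist]
    simpa using (tendsto_pow_atTop_nhds_zero_of_lt_one ha.1.le ha.2).mul_const (dist e p)
  exact hcl.mem_of_tendsto hlim (Filter.Eventually.of_forall hmem)

/-- The `k`-fold iterate of the self-similarity relation `μ = ∑ i, (r i) ^ s • μ ∘ (f i)⁻¹`. -/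
lemma measure_eq_sum_words {X : Type*} [MeasurableSpace X] {f : Fin m → X → X}
    (hf : ∀ i, Measurable (f i)) {r : Fin m → ℝ} (hr : ∀ i, 0 < r i) {s : ℝ} {μ : Measure X}
    (hμself : ∀ A : Set X, MeasurableSet A →
      μ A = ∑ i, ENNReal.ofReal (r i ^ s) * μ (f i ⁻¹' A))
    (k : ℕ) {B : Set X} (hB : MeasurableSet B) :
    μ B = ∑ w : Fin k → Fin m,
      ENNReal.ofReal ((∏ j, r (w j)) ^ s) * μ (fword f (List.ofFn w) ⁻¹' B) := by
  induction k generalizing B with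
  | zero => simp [fword]
  | succ k ih =>
    rw [hμself B hB, ← (Fin.consEquiv fun _ : Fin (k + 1) => Fin m).sum_comp, Fintype.sum_prod_type]
    refine Finset.sum_congr rfl fun i _ => ?_
    rw [ih (hf i hB), Finset.mul_sum]
    refine Finset.sum_congr rfl fun w _ => ?_
    have hpre : fword f (List.ofFn (Fin.cons i w : Fin (k + 1) → Fin m)) ⁻¹' B =
        fword f (List.ofFn w) ⁻¹' (f i ⁻¹' B) := by
      ext x
      simp only [mem_preimage, fword_ofFn_succ, Fin.cons_zero, Fin.cons_succ]
    change _ = ENNReal.ofReal ((∏ j, r ((Fin.cons i w : Fin (k + 1) → Fin m) j)) ^ s) *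
      μ (fword f (List.ofFn (Fin.cons i w : Fin (k + 1) → Fin m)) ⁻¹' B)
    rw [hpre, Fin.prod_univ_succ, Real.mul_rpow (by simpa using (hr _).le)
      (Finset.prod_nonneg fun j _ => (hr _).le),
      ENNReal.ofReal_mul (Real.rpow_nonneg (by simpa using (hr _).le) _)]
    simp only [Fin.cons_zero, Fin.cons_succ, mul_assoc]

/-- The mass of a set is at least that of any cylinder which it contains. -/
lemma le_measure_of_word {X : Type*} [MeasurableSpace X] {f : Fin m → X → X}
    (hf : ∀ i, Measurable (f i)) {r : Fin m → ℝ} (hr : ∀ i, 0 < r i) {s : ℝ} {μ : Measure X}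
    (hμself : ∀ A : Set X, MeasurableSet A →
      μ A = ∑ i, ENNReal.ofReal (r i ^ s) * μ (f i ⁻¹' A))
    {E : Set X} (hμE : μ E = 1) {k : ℕ} (w : Fin k → Fin m) {B : Set X} (hB : MeasurableSet B)
    (hw : ∀ e ∈ E, fword f (List.ofFn w) e ∈ B) :
    ENNReal.ofReal ((∏ j, r (w j)) ^ s) ≤ μ B := by
  rw [measure_eq_sum_words hf hr hμself k hB]
  refine le_trans ?_ (Finset.single_le_sum (fun _ _ => zero_le) (Finset.mem_univ w))
  calc _ = ENNReal.ofReal ((∏ j, r (w j)) ^ s) * μ E := by rw [hμE, mul_one]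
    _ ≤ _ := by gcongr; exact hw

/-- If `B` contains every cylinder whose marked point lies in `A`, then `B` has at least the
discrete mass of `A`: word by word, the iterated self-similarity relation for `μ B` dominates the
sum defining `muk`. -/
lemma muk_le_measure {X : Type*} [MeasurableSpace X] {f : Fin m → X → X}
    (hf : ∀ i, Measurable (f i)) {r : Fin m → ℝ} (hr : ∀ i, 0 < r i) {s : ℝ} {μ : Measure X}
    (hμself : ∀ A : Set X, MeasurableSet A →
      μ A = ∑ i, ENNReal.ofReal (r i ^ s) * μ (f i ⁻¹' A))
    {E : Set X} (hμE : μ E = 1) (p : Fin m → X) (k : ℕ)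
    {A B : Set X} (hA : MeasurableSet A) (hB : MeasurableSet B)
    (h : ∀ w : Fin (k + 1) → Fin m, fword f (List.ofFn w) (p (w (Fin.last k))) ∈ A →
      ∀ e ∈ E, fword f (List.ofFn w) e ∈ B) :
    muk f p r s k A ≤ μ B := by
  rw [measure_eq_sum_words hf hr hμself (k + 1) hB, muk, Measure.finsetSum_apply]
  refine Finset.sum_le_sum fun w _ => ?_
  rw [Measure.smul_apply, smul_eq_mul, Measure.dirac_apply' _ hA]
  gcongr
  by_cases hw : fword f (List.ofFn w) (p (w (Fin.last k))) ∈ A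
  · rw [indicator_of_mem hw, Pi.one_apply, ← hμE]
    exact measure_mono (h w hw)
  · rw [indicator_of_notMem hw]; exact zero_le

lemma muk_pos_of_mem {X : Type*} [MeasurableSpace X] (f : Fin m → X → X)
    {r : Fin m → ℝ} (hr : ∀ i, 0 < r i) (s : ℝ) (p : Fin m → X) (k : ℕ)
    {A : Set X} (hA : MeasurableSet A) (w : Fin (k + 1) → Fin m)
    (hw : fword f (List.ofFn w) (p (w (Fin.last k))) ∈ A) :
    0 < muk f p r s k A := by
  rw [muk, Measure.finsetSum_apply]
  refine lt_of_lt_of_le ?_ (Finset.single_le_sum (fun _ _ => zero_le) (Finset.mem_univ w))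
  rw [Measure.smul_apply, smul_eq_mul, Measure.dirac_apply' _ hA, indicator_of_mem hw,
    Pi.one_apply, mul_one, ENNReal.ofReal_pos]
  exact Real.rpow_pos_of_pos (Finset.prod_pos fun j _ => hr _) _

end Words

lemma rpow_sub_rpow_le {s a b Q δ : ℝ} (hs : 0 < s) (ha : 0 < a) (hδ : 0 ≤ δ) (hQ : 0 ≤ Q)
    (hab : b - a ≤ δ) (hb : 0 < b) (h : ∀ x, a ≤ x → x ≤ b → x ^ (s - 1) ≤ Q) :
    b ^ s - a ^ s ≤ s * Q * δ := by
  rcases le_or_gt b a with hba | hba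
  · have h1 : b ^ s ≤ a ^ s := Real.rpow_le_rpow hb.le hba hs.le
    have : 0 ≤ s * Q * δ := by positivity
    linarith
  · obtain ⟨x, hx, hx'⟩ := exists_hasDerivAt_eq_slope (fun x : ℝ => x ^ s)
      (fun x => s * x ^ (s - 1)) hba
      (fun x hx => (Real.continuousAt_rpow_const x s
        (Or.inl (ha.trans_le hx.1).ne')).continuousWithinAt)
      (fun x hx => Real.hasDerivAt_rpow_const (Or.inl (ha.trans hx.1).ne'))
    have hpos : 0 < b - a := sub_pos.2 hba
    rw [eq_div_iff hpos.ne'] at hx'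
    rw [← hx']
    have := h x hx.1.le hx.2.le
    gcongr

theorem stmt12
    (n m : ℕ) (hn : 1 ≤ n) (hm : 2 ≤ m)
    (f : Fin m → EuclideanSpace ℝ (Fin n) → EuclideanSpace ℝ (Fin n))
    (r : Fin m → ℝ) (hr : ∀ i, r i ∈ Set.Ioo (0 : ℝ) 1)
    (hsim : ∀ i x y, dist (f i x) (f i y) = r i * dist x y)
    (E : Set (EuclideanSpace ℝ (Fin n)))
    (hEne : E.Nonempty) (hEcpt : IsCompact E)
    (hEinv : E = ⋃ i, f i '' E)
    (hssc : ∀ i j, i ≠ j → f i '' E ∩ f j '' E = ∅)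
    (s : ℝ) (hs : 0 < s) (hsum : ∑ i, r i ^ s = 1)
    (μ : Measure (EuclideanSpace ℝ (Fin n)))
    (hμprob : IsProbabilityMeasure μ) (hμE : μ E = 1)
    (hμself : ∀ A : Set (EuclideanSpace ℝ (Fin n)), MeasurableSet A →
      μ A = ∑ i, ENNReal.ofReal (r i ^ s) * μ (f i ⁻¹' A))
    (p : Fin m → EuclideanSpace ℝ (Fin n)) (hp : ∀ i, f i (p i) = p i)
    (rmin rmax : ℝ)
    (hrmin₁ : ∃ i, rmin = r i) (hrmin₂ : ∀ i, rmin ≤ r i)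
    (hrmax₁ : ∃ i, rmax = r i) (hrmax₂ : ∀ i, r i ≤ rmax)
    (c R : ℝ) (hcpos : 0 < c)
    (hc : c = sInf {d : ℝ | ∃ i j, i ≠ j ∧ ∃ x ∈ f i '' E, ∃ y ∈ f j '' E, d = dist x y})
    (hR : R = Metric.diam E)
    (k qk : ℕ) (hqk1 : 1 ≤ qk)
    (hkc : 0 < c - 3 * R * rmax ^ (k + 1) - 2 * R * rmax ^ (k + 2))
    (hqk : R * rmax ^ qk ≤ c - 2 * R * rmax ^ (k + 2) - 2 * R * rmax ^ (k + 1) ∧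
      c - 2 * R * rmax ^ (k + 2) - 2 * R * rmax ^ (k + 1) < R * rmax ^ (qk - 1)) :
    ∀ xt ∈ E, ∀ dt : ℝ,
      c - 2 * R * rmax ^ (k + 2) ≤ dt → dt ≤ (c - 2 * R * rmax ^ (k + 2)) / rmin →
      (Metric.sphere xt dt ∩ E).Nonempty →
      ∃ x' ∈ cloud f p k, ∃ y ∈ cloud f p k,
        dist x' y ∈ Set.Icc (c - 2 * R * rmax ^ (k + 1) - 2 * R * rmax ^ (k + 2)) (c / rmin) ∧
        (2 * dt) ^ s / (μ (Metric.ball xt dt)).toReal -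
            (2 * dist x' y) ^ s / (muk f p r s k (Metric.ball x' (dist x' y))).toReal ≤
          s * (2 : ℝ) ^ (s + 1) * R *
            (if 1 ≤ s then (c / rmin) ^ (s - 1)
              else (c - 2 * R * rmax ^ (k + 1) - 2 * R * rmax ^ (k + 2)) ^ (s - 1)) *
            rmax ^ (k + 1) / rmin ^ (s * (qk : ℝ)) := by
  intro xt hxt dt hdt1 hdt2 ⟨z, hzS, hzE⟩
  have hr0 : ∀ i, 0 < r i := fun i => (hr i).1
  have hrmin0 : 0 < rmin := by obtain ⟨i, hi⟩ := hrmin₁; rw [hi]; exact hr0 i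
  have hrmax0 : 0 < rmax := by obtain ⟨i, hi⟩ := hrmax₁; rw [hi]; exact hr0 i
  have hrmm : rmin ≤ rmax := by obtain ⟨i, hi⟩ := hrmax₁; rw [hi]; exact hrmin₂ i
  have hRpos : 0 < R := by
    rcases (hR ▸ Metric.diam_nonneg : 0 ≤ R).lt_or_eq with h | h
    · exact h
    · exfalso
      have := hqk.2
      rw [← h] at this
      simp only [mul_zero, zero_mul, sub_zero] at this
      linarith
  have hf : ∀ i, Measurable (f i) := fun i =>
    (LipschitzWith.of_dist_le_mul (K := ⟨r i, (hr0 i).le⟩)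
      fun x y => (hsim i x y).le).continuous.measurable
  have hpE : ∀ i, p i ∈ E := fun i =>
    fixedPoint_mem (hr i) (hsim i) hEne hEcpt.isClosed
      (fun x hx => by rw [hEinv]; exact mem_iUnion.2 ⟨i, x, hx, rfl⟩) (hp i)
  -- A cylinder of length `j` has diameter at most `R * rmax ^ j`.
  have hcyl : ∀ (j : ℕ) (w : Fin j → Fin m), ∀ x ∈ E, ∀ y ∈ E,
      dist (fword f (List.ofFn w) x) (fword f (List.ofFn w) y) ≤ R * rmax ^ j := by
    intro j w x hx y hy
    rw [dist_fword hsim, mul_comm]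
    have h1 : dist x y ≤ R := hR ▸ Metric.dist_le_diam_of_mem hEcpt.isBounded hx hy
    have h2 : ∏ i, r (w i) ≤ rmax ^ j := by
      calc ∏ i, r (w i) ≤ ∏ _i : Fin j, rmax :=
            Finset.prod_le_prod (fun i _ => (hr0 _).le) fun i _ => hrmax₂ _
        _ = rmax ^ j := by simp
    have h3 : 0 ≤ ∏ i, r (w i) := Finset.prod_nonneg fun i _ => (hr0 _).le
    exact mul_le_mul h1 h2 h3 hRpos.le
  have hρpos : 0 < R * rmax ^ (k + 1) := by positivity
  have hρ'pos : 0 < R * rmax ^ (k + 2) := by positivity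
  have hρ' : rmin * (R * rmax ^ (k + 1)) ≤ R * rmax ^ (k + 2) := by
    calc _ ≤ rmax * (R * rmax ^ (k + 1)) := by gcongr
      _ = _ := by ring
  have hcyl' := hcyl (k + 1)
  have hqk1' := hqk.1
  set L := c - 2 * R * rmax ^ (k + 1) - 2 * R * rmax ^ (k + 2) with hL
  have hLpos : 0 < L := by rw [hL]; linarith
  set pt : (Fin (k + 1) → Fin m) → EuclideanSpace ℝ (Fin n) :=
    fun w => fword f (List.ofFn w) (p (w (Fin.last k))) with hpt
  obtain ⟨wx, ex, hex, hwx⟩ := exists_word_of_mem hEinv (k + 1) hxt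
  obtain ⟨wz, ez, hez, hwz⟩ := exists_word_of_mem hEinv (k + 1) hzE
  have hdx : dist xt (pt wx) ≤ R * rmax ^ (k + 1) := by
    rw [← hwx]; exact hcyl' wx ex hex _ (hpE _)
  have hdz : dist z (pt wz) ≤ R * rmax ^ (k + 1) := by
    rw [← hwz]; exact hcyl' wz ez hez _ (hpE _)
  rw [Metric.mem_sphere] at hzS
  have hz1 : dt - 2 * (R * rmax ^ (k + 1)) ≤ dist (pt wx) (pt wz) := by
    have h1 := dist_triangle4 z (pt wz) (pt wx) xt
    rw [dist_comm (pt wz), dist_comm (pt wx) xt] at h1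
    linarith
  have hz2 : dist (pt wx) (pt wz) ≤ dt + 2 * (R * rmax ^ (k + 1)) := by
    have h1 := dist_triangle4 (pt wx) xt z (pt wz)
    rw [dist_comm (pt wx) xt, dist_comm xt z] at h1
    linarith
  classical
  obtain ⟨wy, hwy, hmin⟩ := Finset.exists_min_image
    (Finset.univ.filter fun w => dt - 2 * (R * rmax ^ (k + 1)) ≤ dist (pt wx) (pt w))
    (fun w => dist (pt wx) (pt w)) ⟨wz, by simpa using hz1⟩
  simp only [Finset.mem_filter, Finset.mem_univ, true_and] at hwy hmin
  have hd2 : dist (pt wx) (pt wy) ≤ dt + 2 * (R * rmax ^ (k + 1)) := (hmin wz hz1).trans hz2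
  set d' := dist (pt wx) (pt wy) with hd'
  have hLd : L ≤ d' := by rw [hL]; linarith
  have hdtc : dt + 2 * (R * rmax ^ (k + 1)) ≤ c / rmin := by
    rw [le_div_iff₀ hrmin0] at hdt2 ⊢
    linarith
  refine ⟨pt wx, fword_mem_cloud hp k wx, pt wy, fword_mem_cloud hp k wy,
    ⟨hLd, hd2.trans hdtc⟩, ?_⟩
  rw [← hd']
  have hd'pos : 0 < d' := hLpos.trans_le hLd
  have hdtpos : 0 < dt := by linarith
  have hmuk : muk f p r s k (Metric.ball (pt wx) d') ≤ μ (Metric.ball xt dt) := by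
    refine muk_le_measure hf hr0 hμself hμE p k measurableSet_ball measurableSet_ball ?_
    intro w hw e he
    rw [Metric.mem_ball, dist_comm] at hw
    have hlt : dist (pt wx) (pt w) < dt - 2 * (R * rmax ^ (k + 1)) := by
      by_contra hcon
      exact absurd (hmin w (not_lt.1 hcon)) (not_le.2 hw)
    have h1 := hcyl' w e he _ (hpE (w (Fin.last k)))
    change dist _ (pt w) ≤ _ at h1
    have h2 := dist_triangle4 (fword f (List.ofFn w) e) (pt w) (pt wx) xt
    rw [dist_comm (pt w), dist_comm (pt wx) xt] at h2
    rw [Metric.mem_ball]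
    linarith
  have hmukpos : 0 < muk f p r s k (Metric.ball (pt wx) d') :=
    muk_pos_of_mem f hr0 s p k measurableSet_ball wx (Metric.mem_ball_self hd'pos)
  have hμlow : ENNReal.ofReal (rmin ^ (s * (qk : ℝ))) ≤ μ (Metric.ball xt dt) := by
    obtain ⟨w, e, he, hw⟩ := exists_word_of_mem hEinv qk hxt
    refine le_trans (ENNReal.ofReal_le_ofReal ?_)
      (le_measure_of_word hf hr0 hμself hμE w measurableSet_ball ?_)
    · rw [mul_comm, Real.rpow_mul hrmin0.le, Real.rpow_natCast]
      refine Real.rpow_le_rpow (by positivity) ?_ hs.le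
      calc rmin ^ qk = ∏ _i : Fin qk, rmin := by simp
        _ ≤ _ := Finset.prod_le_prod (fun i _ => hrmin0.le) fun i _ => hrmin₂ _
    · intro e' he'
      have := hcyl qk w e' he' e he
      rw [hw] at this
      rw [Metric.mem_ball]
      linarith
  have hfin : μ (Metric.ball xt dt) ≠ ⊤ := measure_ne_top μ _
  have ha : 0 < (muk f p r s k (Metric.ball (pt wx) d')).toReal :=
    ENNReal.toReal_pos hmukpos.ne' (ne_top_of_le_ne_top hfin hmuk)
  have hab : (muk f p r s k (Metric.ball (pt wx) d')).toReal ≤ (μ (Metric.ball xt dt)).toReal :=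
    ENNReal.toReal_mono hfin hmuk
  have hrq : 0 < rmin ^ (s * (qk : ℝ)) := Real.rpow_pos_of_pos hrmin0 _
  have hqb : rmin ^ (s * (qk : ℝ)) ≤ (μ (Metric.ball xt dt)).toReal :=
    (ENNReal.ofReal_le_iff_le_toReal hfin).1 hμlow
  generalize (muk f p r s k (Metric.ball (pt wx) d')).toReal = M' at ha hab
  generalize (μ (Metric.ball xt dt)).toReal = M at hab hqb
  have hM : 0 < M := ha.trans_le hab
  set Q : ℝ := if 1 ≤ s then (c / rmin) ^ (s - 1) else L ^ (s - 1) with hQdef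
  have hQ : 0 ≤ Q := by
    rw [hQdef]; split_ifs <;> positivity
  have hmvt : dt ^ s - d' ^ s ≤ s * Q * (2 * (R * rmax ^ (k + 1))) := by
    refine rpow_sub_rpow_le hs hd'pos (by positivity) hQ (by linarith) hdtpos ?_
    intro x hx1 hx2
    have hx0 : 0 < x := hd'pos.trans_le hx1
    rw [hQdef]
    split_ifs with h1
    · exact Real.rpow_le_rpow hx0.le (by linarith) (by linarith)
    · exact Real.rpow_le_rpow_of_nonpos hLpos (hLd.trans hx1) (by linarith)
  calc (2 * dt) ^ s / M - (2 * d') ^ s / M' ≤ (2 * dt) ^ s / M - (2 * d') ^ s / M := by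
        gcongr
    _ = 2 ^ s * (dt ^ s - d' ^ s) / M := by
        rw [Real.mul_rpow zero_le_two hdtpos.le, Real.mul_rpow zero_le_two hd'pos.le]; ring
    _ ≤ 2 ^ s * (s * Q * (2 * (R * rmax ^ (k + 1)))) / M := by gcongr
    _ ≤ 2 ^ s * (s * Q * (2 * (R * rmax ^ (k + 1)))) / rmin ^ (s * (qk : ℝ)) := by gcongr
    _ = s * (2 : ℝ) ^ (s + 1) * R * Q * rmax ^ (k + 1) / rmin ^ (s * (qk : ℝ)) := by
        rw [Real.rpow_add_one two_ne_zero]; ring
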